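/- Subfunction bound for k-NOBDDs (Theorem th-main2-small): Let f : {0,1}^n → {0,1} be computed by a k-NOBDD of width w (with some order θ), where k ≥ 1, w ≥ 1 and n ≥ 2. Then N(f) ≤ 2^{w·((k−1)·w + 1)}. -/

import Mathlib

/-- The variable index read at level `m` of a `k`-layer ordered BDD with order `θ`. -/
def varIdx {n : ℕ} (k : ℕ) (θ : Equiv.Perm (Fin n)) (m : Fin (k * n)) : Fin n :=
  θ ⟨m.val % n, Nat.mod_lt _ (Nat.pos_of_ne_zero (fun h => absurd m.isLt (by subst h; simp)))⟩

/-- A nondeterministic ordered read-`k`-times branching program (`k`-NOBDD) of width `w`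
over `n` Boolean variables. -/
structure KNOBDD (n k w : ℕ) where
  order : Equiv.Perm (Fin n)
  trans : Fin (k * n) → Fin w → Bool → Fin w → Prop
  start : Fin w
  accept : Fin w → Prop

/-- The `k`-NOBDD `P` computes `f` if for every input there is an accepting run iff `f` is 1. -/
def KNOBDD.Computes {n k w : ℕ} (P : KNOBDD n k w) (f : (Fin n → Bool) → Bool) : Prop :=
  ∀ ν : Fin n → Bool,
    (f ν = true ↔
      ∃ run : Fin (k * n + 1) → Fin w,
        run 0 = P.start ∧
        (∀ m : Fin (k * n),
          P.trans m (run m.castSucc) (ν (varIdx k P.order m)) (run m.succ)) ∧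
        P.accept (run (Fin.last (k * n))))

/-- Merge an assignment `σ` to the variables in `A` with an assignment `γ` to the
variables outside `A` into a full assignment. -/
def mergeAssign {n : ℕ} (A : Finset (Fin n)) (σ : {i : Fin n // i ∈ A} → Bool)
    (γ : {i : Fin n // i ∉ A} → Bool) : Fin n → Bool :=
  fun i => if h : i ∈ A then σ ⟨i, h⟩ else γ ⟨i, h⟩

/-- `N^π(f)`: the number of distinct subfunctions `γ ↦ f(σ,γ)` of `f` with respect to
the partition `π = (A, Aᶜ)` of the variables. -/
def NsubA {n : ℕ} (f : (Fin n → Bool) → Bool) (A : Finset (Fin n)) : ℕ :=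
  (Finset.univ.image fun σ : {i : Fin n // i ∈ A} → Bool =>
    fun γ : {i : Fin n // i ∉ A} → Bool => f (mergeAssign A σ γ)).card

/-- `N^θ(f)`: the maximum of `N^π(f)` over all partitions `π` agreeing with the order `θ`,
i.e. with `X_A = {x_{θ(1)}, …, x_{θ(u)}}` for some `1 ≤ u ≤ n - 1`. -/
def NsubTheta {n : ℕ} (f : (Fin n → Bool) → Bool) (θ : Equiv.Perm (Fin n)) : ℕ :=
  (Finset.Icc 1 (n - 1)).sup fun u =>
    NsubA f (Finset.univ.filter fun i : Fin n => ((θ.symm i : Fin n) : ℕ) < u)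

/-- `N(f)`: the minimum of `N^θ(f)` over all orders `θ`. -/
def Nmin {n : ℕ} (f : (Fin n → Bool) → Bool) : ℕ :=
  Finset.univ.inf' Finset.univ_nonempty fun θ : Equiv.Perm (Fin n) => NsubTheta f θ

/-!
Cut the order `θ` of the program after its first `u` variables `A`. Each of the `k` layers is then
a block of levels reading `A` followed by a block reading the complement of `A`. A partial
assignment `σ` of `A` influences the computation only through the set of nodes reached at the end of
the first `A`-block (`2 ^ w` possibilities) and the transition relations of the remaining `k - 1`
`A`-blocks (`2 ^ (w * w)` possibilities each). Hence there are at most `2 ^ (w + (k - 1) * w * w)`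
subfunctions.
-/

open SetRel

section PathRel

variable {α : Type*}

/-- The composition `T s ○ T (s + 1) ○ ⋯ ○ T (s + l - 1)`: in a leveled graph with edges `T m` from
level `m` to level `m + 1`, it relates the endpoints of the paths of length `l` that start at
level `s`. -/
def pathRel (T : ℕ → SetRel α α) (s : ℕ) : ℕ → SetRel α α
  | 0 => SetRel.id
  | l + 1 => T s ○ pathRel T (s + 1) l

theorem pathRel_add (T : ℕ → SetRel α α) (s l₁ l₂ : ℕ) :
    pathRel T s (l₁ + l₂) = pathRel T s l₁ ○ pathRel T (s + l₁) l₂ := by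
  induction l₁ generalizing s with
  | zero => simp only [Nat.zero_add, Nat.add_zero, pathRel, id_comp]
  | succ l₁ ih =>
    rw [Nat.add_right_comm l₁ 1 l₂, pathRel, pathRel, ih, comp_assoc, Nat.add_right_comm s 1 l₁,
      Nat.add_assoc s l₁ 1]

theorem pathRel_congr {T T' : ℕ → SetRel α α} {s l : ℕ}
    (h : ∀ m ∈ Set.Ico s (s + l), T m = T' m) : pathRel T s l = pathRel T' s l := by
  induction l generalizing s with
  | zero => rfl
  | succ l ih =>
    rw [pathRel, pathRel, h s ⟨le_rfl, by omega⟩,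
      ih fun m hm => h m ⟨by have := hm.1; omega, by have := hm.2; omega⟩]

theorem mem_pathRel_iff_exists_run {T : ℕ → SetRel α α} {s l : ℕ} {a b : α} :
    (a, b) ∈ pathRel T s l ↔ ∃ run : Fin (l + 1) → α, run 0 = a ∧
      (∀ m : Fin l, (run m.castSucc, run m.succ) ∈ T (s + m)) ∧ run (Fin.last l) = b := by
  induction l generalizing s a with
  | zero => simp [pathRel, Fin.exists_fin_succ_pi]
  | succ l ih =>
    simp [pathRel, ih, Fin.exists_fin_succ_pi (n := l + 1), Fin.forall_fin_succ, and_assoc,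
      Nat.add_assoc, Nat.add_comm 1]

theorem image_pathRel_add (T : ℕ → SetRel α α) (m l : ℕ) (S : Set α) :
    (pathRel T 0 (m + l)).image S = (pathRel T m l).image ((pathRel T 0 m).image S) := by
  rw [pathRel_add, image_comp, Nat.zero_add]

theorem image_pathRel_layers_eq {T T' : ℕ → SetRel α α} {S : Set α} {k n u : ℕ} (hu : u ≤ n)
    (hfirst : (pathRel T 0 u).image S = (pathRel T' 0 u).image S)
    (hprefix : ∀ j, j + 1 < k → pathRel T ((j + 1) * n) u = pathRel T' ((j + 1) * n) u)
    (hsuffix : ∀ j < k, pathRel T (j * n + u) (n - u) = pathRel T' (j * n + u) (n - u)) :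
    (pathRel T 0 (k * n)).image S = (pathRel T' 0 (k * n)).image S := by
  suffices h : ∀ j ≤ k, (pathRel T 0 (j * n)).image S = (pathRel T' 0 (j * n)).image S from
    h k le_rfl
  intro j hj
  induction j with
  | zero => simp only [Nat.zero_mul, pathRel]
  | succ j ih =>
    have hcut : (pathRel T 0 (j * n + u)).image S = (pathRel T' 0 (j * n + u)).image S := by
      cases j with
      | zero => simpa only [Nat.zero_mul, Nat.zero_add] using hfirst
      | succ j => rw [image_pathRel_add, image_pathRel_add, ih (by omega), hprefix j hj]
    have hlayer : (j + 1) * n = j * n + u + (n - u) := by rw [Nat.succ_mul]; omega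
    rw [hlayer, image_pathRel_add _ (j * n + u), image_pathRel_add _ (j * n + u), hcut,
      hsuffix j hj]

end PathRel

theorem card_image_le_card_image_of_eq_imp_eq {ι α β : Type*} [DecidableEq α] [DecidableEq β]
    {s : Finset ι} {F : ι → α} {D : ι → β} (h : ∀ x ∈ s, ∀ y ∈ s, D x = D y → F x = F y) :
    (s.image F).card ≤ (s.image D).card := by
  refine Finset.card_le_card_of_forall_subsingleton (fun a b => ∃ x ∈ s, F x = a ∧ D x = b) ?_ ?_
  · rintro _ ha
    obtain ⟨x, hx, rfl⟩ := Finset.mem_image.1 ha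
    exact ⟨D x, Finset.mem_image_of_mem D hx, x, hx, rfl, rfl⟩
  · rintro _ - _ ⟨-, x, hx, rfl, rfl⟩ _ ⟨-, y, hy, rfl, hyx⟩
    exact h x hx y hy hyx.symm

section Subfunctions

variable {n : ℕ} {A : Finset (Fin n)}

theorem mergeAssign_of_mem (σ : {i : Fin n // i ∈ A} → Bool) (γ : {i : Fin n // i ∉ A} → Bool)
    {i : Fin n} (hi : i ∈ A) : mergeAssign A σ γ i = σ ⟨i, hi⟩ :=
  dif_pos hi

theorem mergeAssign_of_notMem (σ : {i : Fin n // i ∈ A} → Bool) (γ : {i : Fin n // i ∉ A} → Bool)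
    {i : Fin n} (hi : i ∉ A) : mergeAssign A σ γ i = γ ⟨i, hi⟩ :=
  dif_neg hi

theorem nsubA_le_card_of_dependsOn {f : (Fin n → Bool) → Bool} {δ : Type*} [Fintype δ]
    {D : (Fin n → Bool) → δ} (hD : DependsOn D A)
    (hf : ∀ ν ν', (∀ i ∉ A, ν i = ν' i) → D ν = D ν' → f ν = f ν') :
    NsubA f A ≤ Fintype.card δ := by
  classical
  have hγ (σ γ γ') : D (mergeAssign A σ γ) = D (mergeAssign A σ γ') :=
    hD fun i hi => by rw [mergeAssign_of_mem σ γ hi, mergeAssign_of_mem σ γ' hi]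
  refine (card_image_le_card_image_of_eq_imp_eq
    (D := fun σ => D (mergeAssign A σ fun _ => false)) ?_).trans (Finset.card_le_univ _)
  intro σ _ σ' _ hσ
  funext γ
  refine hf _ _ (fun i hi => ?_) ?_
  · rw [mergeAssign_of_notMem σ γ hi, mergeAssign_of_notMem σ' γ hi]
  · rw [hγ σ γ, hσ, hγ σ']

end Subfunctions

theorem symm_varIdx {n : ℕ} (k : ℕ) (θ : Equiv.Perm (Fin n)) (m : Fin (k * n)) :
    (θ.symm (varIdx k θ m) : ℕ) = m % n := by
  rw [varIdx, Equiv.symm_apply_apply]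

namespace KNOBDD

variable {n k w : ℕ} (P : KNOBDD n k w)

/-- The edges of `P` from level `m` to level `m + 1` that are consistent with the input `ν`.
Levels are indexed by `ℕ`, with no edges leaving the levels `m ≥ k * n`. -/
def stepRel (ν : Fin n → Bool) (m : ℕ) : SetRel (Fin w) (Fin w) :=
  {(a, b) | ∃ h : m < k * n, P.trans ⟨m, h⟩ a (ν (varIdx k P.order ⟨m, h⟩)) b}

theorem Computes.eq_true_iff {P : KNOBDD n k w} {f : (Fin n → Bool) → Bool} (hP : P.Computes f)
    (ν : Fin n → Bool) :
    f ν = true ↔ ∃ b ∈ (pathRel (P.stepRel ν) 0 (k * n)).image {P.start}, P.accept b := by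
  simp [hP ν, mem_pathRel_iff_exists_run, stepRel, and_assoc]

theorem dependsOn_pathRel_stepRel (j : ℕ) {r l : ℕ} (hrl : r + l ≤ n) :
    DependsOn (fun ν => pathRel (P.stepRel ν) (j * n + r) l)
      {i | (P.order.symm i : ℕ) ∈ Set.Ico r (r + l)} := by
  intro ν ν' hν
  refine pathRel_congr fun m ⟨hm, hm'⟩ => ?_
  obtain ⟨d, rfl⟩ := Nat.exists_eq_add_of_le hm
  have hmod : (j * n + r + d) % n = r + d := by
    rw [Nat.add_assoc, Nat.mul_add_mod', Nat.mod_eq_of_lt (by omega)]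
  have hread (h : j * n + r + d < k * n) :
      ν (varIdx k P.order ⟨_, h⟩) = ν' (varIdx k P.order ⟨_, h⟩) :=
    hν _ (by simp only [Set.mem_ofPred_eq, symm_varIdx, hmod, Set.mem_Ico]; omega)
  simp only [stepRel, hread]

/-- All that `P` can learn about the first `u` variables of its order: the set of nodes reached
after reading them in the first layer, and the relation between entry and exit nodes of the block of
levels reading them in each of the later layers. The index `j : Fin (k - 1)` stands for layer
`j + 1`, counting from `0`. -/
def prefixProfile (u : ℕ) (ν : Fin n → Bool) :
    Set (Fin w) × (Fin (k - 1) → SetRel (Fin w) (Fin w)) :=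
  ((pathRel (P.stepRel ν) 0 u).image {P.start}, fun j => pathRel (P.stepRel ν) ((j + 1) * n) u)

theorem dependsOn_prefixProfile {u : ℕ} (hu : u ≤ n) :
    DependsOn (P.prefixProfile u) {i | (P.order.symm i : ℕ) < u} := by
  have hblock (j : ℕ) := P.dependsOn_pathRel_stepRel j (r := 0) (l := u) (by omega)
  simp only [Nat.add_zero, Nat.zero_add, Set.mem_Ico, Nat.zero_le, true_and] at hblock
  intro ν ν' hν
  have hfirst : pathRel (P.stepRel ν) 0 u = pathRel (P.stepRel ν') 0 u := by
    simpa only [Nat.zero_mul] using hblock 0 hν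
  exact Prod.ext (congrArg (image · {P.start}) hfirst) (funext fun j => hblock (j + 1) hν)

theorem Computes.eq_of_prefixProfile_eq {P : KNOBDD n k w} {f : (Fin n → Bool) → Bool}
    (hP : P.Computes f) {u : ℕ} (hu : u ≤ n) {ν ν' : Fin n → Bool}
    (hν : ∀ i, u ≤ (P.order.symm i : ℕ) → ν i = ν' i)
    (hprofile : P.prefixProfile u ν = P.prefixProfile u ν') : f ν = f ν' := by
  obtain ⟨hfirst, hprefix⟩ := Prod.ext_iff.1 hprofile
  have hreach : (pathRel (P.stepRel ν) 0 (k * n)).image {P.start} =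
      (pathRel (P.stepRel ν') 0 (k * n)).image {P.start} :=
    image_pathRel_layers_eq hu hfirst (fun j hj => congrFun hprefix ⟨j, by omega⟩)
      fun j _ => P.dependsOn_pathRel_stepRel j (by omega) fun i hi => hν i hi.1
  rw [Bool.eq_iff_iff, hP.eq_true_iff, hP.eq_true_iff, hreach]

theorem card_prefixProfile_codomain (k w : ℕ) :
    Fintype.card (Set (Fin w) × (Fin (k - 1) → SetRel (Fin w) (Fin w))) =
      2 ^ (w * ((k - 1) * w + 1)) := by
  simp only [Fintype.card_prod, Fintype.card_fun, Fintype.card_set, Fintype.card_fin]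
  ring

theorem Computes.nsubTheta_order_le {P : KNOBDD n k w} {f : (Fin n → Bool) → Bool}
    (hP : P.Computes f) : NsubTheta f P.order ≤ 2 ^ (w * ((k - 1) * w + 1)) := by
  refine Finset.sup_le fun u hu => ?_
  have hun : u ≤ n := by have := Finset.mem_Icc.1 hu; omega
  rw [← card_prefixProfile_codomain]
  refine nsubA_le_card_of_dependsOn (D := P.prefixProfile u) ?_ fun ν ν' hν => ?_
  · simpa using P.dependsOn_prefixProfile hun
  · exact hP.eq_of_prefixProfile_eq hun fun i hi => hν i (by simpa using hi)

end KNOBDD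

/-- **Subfunction bound for `k`-NOBDDs.** If `f : {0,1}^n → {0,1}` (`n ≥ 2`) is computed
by a `k`-NOBDD of width `w` (`k ≥ 1`, `w ≥ 1`), then `N(f) ≤ 2^(w·((k-1)·w + 1))`. -/
theorem knobdd_subfunction_bound (n k w : ℕ) (hn : 2 ≤ n) (hk : 1 ≤ k) (hw : 1 ≤ w)
    (f : (Fin n → Bool) → Bool) (P : KNOBDD n k w) (hP : P.Computes f) :
    Nmin f ≤ 2 ^ (w * ((k - 1) * w + 1)) :=
  (Finset.inf'_le _ (Finset.mem_univ P.order)).trans hP.nsubTheta_order_le
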